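/- Let ω = e^{2πi/3}. For all complex numbers a and b, the matrix-valued function k ↦ P(k)⁻¹ · A · P(k), where A is the 3×3 matrix with rows (a, 0, 0), (0, 0, 0), (0, b, -a), converges as k → 0 (k ≠ 0) to the matrix ℬ · 𝒱̃ · ℬ, where 𝒱̃ = (a/(ω(1-ω))) · N, N is the 3×3 matrix with rows (0, ω, 1+ω), (1+ω, 0, ω), (ω, 1+ω, 0), and ℬ is the permutation matrix with rows (0,1,0), (1,0,0), (0,0,1). (This says that the leading term of Ṽ₁ as k → 0 is off-diagonal and equals ℬ𝒱̃ℬ.) -/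

import Mathlib

open Complex

/-- The primitive cube root of unity `ω = e^{2πi/3}`. -/
noncomputable def ω : ℂ := Complex.exp (2 * Real.pi * Complex.I / 3)

/-- `l_j(k) = (1/√3)(ω^j k + 1/(ω^j k))`. -/
noncomputable def lfun (j : ℕ) (k : ℂ) : ℂ :=
  (1 / (Real.sqrt 3 : ℂ)) * (ω ^ j * k + 1 / (ω ^ j * k))

/-- `λ(k) = (1/(3√3))(k³ + 1/k³)`. -/
noncomputable def lamfun (k : ℂ) : ℂ :=
  (1 / (3 * (Real.sqrt 3 : ℂ))) * (k ^ 3 + 1 / k ^ 3)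

/-- `z_j(k) = √3 ((ω^j k)² + (ω^j k)⁻²)/(k³ + k⁻³)`. -/
noncomputable def zfun (j : ℕ) (k : ℂ) : ℂ :=
  (Real.sqrt 3 : ℂ) * ((ω ^ j * k) ^ 2 + ((ω ^ j * k) ^ 2)⁻¹) / (k ^ 3 + (k ^ 3)⁻¹)

/-- The matrix `P(k)` with rows `(1,1,1)`, `(l₁,l₂,l₃)`, `(l₁²,l₂²,l₃²)`. -/
noncomputable def Pmat (k : ℂ) : Matrix (Fin 3) (Fin 3) ℂ :=
  !![1, 1, 1;
     lfun 1 k, lfun 2 k, lfun 3 k;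
     (lfun 1 k) ^ 2, (lfun 2 k) ^ 2, (lfun 3 k) ^ 2]

/-- The cyclic permutation matrix `𝒜`. -/
def matA : Matrix (Fin 3) (Fin 3) ℂ := !![0, 0, 1; 1, 0, 0; 0, 1, 0]

/-- The transposition matrix `ℬ`. -/
def matB : Matrix (Fin 3) (Fin 3) ℂ := !![0, 1, 0; 1, 0, 0; 0, 0, 1]

lemma w_cube : ω ^ 3 = 1 := by
  unfold ω
  rw [← Complex.exp_nat_mul]
  rw [← Complex.exp_two_pi_mul_I]
  congr 1
  push_cast
  ring

lemma w_ne_one : ω ≠ 1 := by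
  have h := Complex.isPrimitiveRoot_exp 3 (by norm_num)
  have h2 := h.ne_one (by norm_num)
  unfold ω
  simpa using h2

lemma w_sq : ω ^ 2 = -1 - ω := by
  have h : (ω - 1) * (ω ^ 2 + ω + 1) = 0 := by linear_combination w_cube
  rcases mul_eq_zero.mp h with h | h
  · exact absurd (sub_eq_zero.mp h) w_ne_one
  · linear_combination h

lemma w_ne_zero : ω ≠ 0 := by
  intro h
  have := w_cube
  rw [h] at this
  norm_num at this

/-- Rescaled version of `P(k)`, regular at `k = 0`. -/
noncomputable def Mmat (k : ℂ) : Matrix (Fin 3) (Fin 3) ℂ :=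
  !![1, 1, 1;
     ω * k ^ 2 + ω ^ 2, ω ^ 2 * k ^ 2 + ω, k ^ 2 + 1;
     (ω * k ^ 2 + ω ^ 2) ^ 2, (ω ^ 2 * k ^ 2 + ω) ^ 2, (k ^ 2 + 1) ^ 2]

noncomputable def Dmat (s : ℂ) : Matrix (Fin 3) (Fin 3) ℂ :=
  !![1, 0, 0; 0, s, 0; 0, 0, s ^ 2]

lemma Dmat_inv (s : ℂ) (hs : s ≠ 0) : (Dmat s)⁻¹ = Dmat s⁻¹ := by
  apply Matrix.inv_eq_right_inv
  ext i j
  fin_cases i <;> fin_cases j <;> simp [Dmat, Matrix.mul_apply, Fin.sum_univ_three, hs]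

lemma sqrt3_ne : (Real.sqrt 3 : ℂ) ≠ 0 := by
  simp

lemma lfun_one (k : ℂ) (hk : k ≠ 0) :
    lfun 1 k = (1 / ((Real.sqrt 3 : ℂ) * k)) * (ω * k ^ 2 + ω ^ 2) := by
  have h3 := sqrt3_ne
  have hw := w_ne_zero
  unfold lfun
  field_simp
  linear_combination -w_cube

lemma lfun_two (k : ℂ) (hk : k ≠ 0) :
    lfun 2 k = (1 / ((Real.sqrt 3 : ℂ) * k)) * (ω ^ 2 * k ^ 2 + ω) := by
  have h3 := sqrt3_ne
  have hw := w_ne_zero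
  unfold lfun
  field_simp
  linear_combination -w_cube

lemma lfun_three (k : ℂ) (hk : k ≠ 0) :
    lfun 3 k = (1 / ((Real.sqrt 3 : ℂ) * k)) * (k ^ 2 + 1) := by
  have h3 := sqrt3_ne
  unfold lfun
  rw [w_cube]
  field_simp

lemma Pmat_eq (k : ℂ) (hk : k ≠ 0) :
    Pmat k = Dmat (1 / ((Real.sqrt 3 : ℂ) * k)) * Mmat k := by
  unfold Pmat
  rw [lfun_one k hk, lfun_two k hk, lfun_three k hk]
  ext i j
  fin_cases i <;> fin_cases j <;>
    simp [Dmat, Mmat, Matrix.mul_apply, Fin.sum_univ_three, mul_pow]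

noncomputable def Amat (a b k : ℂ) : Matrix (Fin 3) (Fin 3) ℂ :=
  !![a, 0, 0; 0, 0, 0; 0, b * ((Real.sqrt 3 : ℂ) * k), -a]

lemma conj_eq (a b k : ℂ) (hk : k ≠ 0) :
    (Pmat k)⁻¹ * (!![a, 0, 0; 0, 0, 0; 0, b, -a] : Matrix (Fin 3) (Fin 3) ℂ) * Pmat k
      = (Mmat k)⁻¹ * Amat a b k * Mmat k := by
  have h3 := sqrt3_ne
  have hA : Dmat ((Real.sqrt 3 : ℂ) * k) *
      (!![a, 0, 0; 0, 0, 0; 0, b, -a] : Matrix (Fin 3) (Fin 3) ℂ) *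
      Dmat (1 / ((Real.sqrt 3 : ℂ) * k)) = Amat a b k := by
    unfold Amat
    generalize (Real.sqrt 3 : ℂ) = t at *
    ext i j
    fin_cases i <;> fin_cases j <;>
      simp [Dmat, Matrix.mul_apply, Fin.sum_univ_three] <;> field_simp
  rw [Pmat_eq k hk, Matrix.mul_inv_rev, Dmat_inv _ (by simp [hk]), ← hA]
  simp only [one_div, inv_inv, Matrix.mul_assoc]

noncomputable def Minv0 : Matrix (Fin 3) (Fin 3) ℂ :=
  !![1 / 3, ω / 3, ω ^ 2 / 3; 1 / 3, ω ^ 2 / 3, ω / 3; 1 / 3, 1 / 3, 1 / 3]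

lemma M0_eq : Mmat 0 = !![1, 1, 1; ω ^ 2, ω, 1; ω, ω ^ 2, 1] := by
  have h : (ω ^ 2) ^ 2 = ω := by linear_combination ω * w_cube
  simp [Mmat, h]

lemma M0_mul : Mmat 0 * Minv0 = 1 := by
  have h2 := w_sq
  have h3 := w_cube
  rw [M0_eq]
  ext i j
  fin_cases i <;> fin_cases j <;>
    simp [Minv0, Matrix.mul_apply, Fin.sum_univ_three] <;> grind

lemma M0_inv : (Mmat 0)⁻¹ = Minv0 := Matrix.inv_eq_right_inv M0_mul

lemma M0_det : (Mmat 0).det ≠ 0 := by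
  intro h
  have := congrArg Matrix.det M0_mul
  rw [Matrix.det_mul, h] at this
  simp at this

lemma Mmat_cont : Continuous Mmat := by
  refine continuous_matrix fun i j => ?_
  fin_cases i <;> fin_cases j <;> simp [Mmat] <;> fun_prop

lemma Amat_cont (a b : ℂ) : Continuous (Amat a b) := by
  refine continuous_matrix fun i j => ?_
  fin_cases i <;> fin_cases j <;> simp [Amat] <;> fun_prop

lemma Minv_cont : ContinuousAt (fun k => (Mmat k)⁻¹) 0 := by
  simp only [Matrix.inv_def, Ring.inverse_eq_inv']
  exact (Mmat_cont.matrix_det.continuousAt.inv₀ M0_det).smul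
    Mmat_cont.matrix_adjugate.continuousAt

lemma value0 (a b : ℂ) : (Mmat 0)⁻¹ * Amat a b 0 * Mmat 0 =
    matB * ((a / (ω * (1 - ω))) •
          !![0, ω, 1 + ω; 1 + ω, 0, ω; ω, 1 + ω, 0]) * matB := by
  have h2 := w_sq
  have h3 := w_cube
  have hc : a / (ω * (1 - ω)) = a * (ω ^ 2 * (1 - ω ^ 2) / 3) := by
    have : 1 - ω ≠ 0 := sub_ne_zero.mpr w_ne_one.symm
    rw [div_eq_iff (mul_ne_zero w_ne_zero this)]
    grind
  rw [M0_inv, M0_eq, hc]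
  ext i j
  fin_cases i <;> fin_cases j <;>
    simp [Minv0, Amat, matB, Matrix.mul_apply, Fin.sum_univ_three] <;> grind

open Filter Topology in
/-- As `k → 0`, `P(k)⁻¹ A P(k) → ℬ 𝒱̃ ℬ`, where `A` has rows `(a,0,0)`, `(0,0,0)`,
`(0,b,-a)` and `𝒱̃ = (a/(ω(1-ω))) N` with `N` having rows `(0,ω,1+ω)`, `(1+ω,0,ω)`,
`(ω,1+ω,0)`. -/
theorem Vtilde1_leading_term_at_zero (a b : ℂ) :
    Tendsto
      (fun k : ℂ => (Pmat k)⁻¹ *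
        (!![a, 0, 0;
            0, 0, 0;
            0, b, -a] : Matrix (Fin 3) (Fin 3) ℂ) * Pmat k)
      (𝓝[≠] (0 : ℂ))
      (𝓝 (matB *
        ((a / (ω * (1 - ω))) •
          !![0, ω, 1 + ω;
             1 + ω, 0, ω;
             ω, 1 + ω, 0]) * matB)) := by
  rw [← value0 a b]
  have h : ContinuousAt (fun k => (Mmat k)⁻¹ * Amat a b k * Mmat k) 0 :=
    (Minv_cont.mul (Amat_cont a b).continuousAt).mul Mmat_cont.continuousAt
  refine (h.tendsto.mono_left nhdsWithin_le_nhds).congr' ?_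
  filter_upwards [self_mem_nhdsWithin] with k hk
  exact (conj_eq a b k hk).symm
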